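/- arXiv:0704.3576 — 6 statements merged into one kernel-verified Lean document; each statement's English description precedes it below -/
import Mathlib

section
/- Rodriguez type formula: for every real ν > 0, every ξ ∈ ℂ, all nonnegative integers m, n and all (z,w) ∈ ℂ², the iterated partial derivative (taken first m times in the variable w, then n times in the variable z) of the entire function (z,w) ↦ exp(-ν·z·w - (conj(ξ)/2)·z) satisfies ∂^n_z ∂^m_w [exp(-ν·z·w - (conj(ξ)/2)·z)] = (-1)^{m+n} · ν^m · exp(-ν·z·w - (conj(ξ)/2)·z) · G_ν^{m,n}(z,w|ξ). -/
/-!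
Each `w`-derivative of `exp (-ν z w - (conj ξ / 2) z)` brings down a factor `-ν z`, so after `m` of
them the function is `(-ν)^m z^m exp (-a z)` with `a = ν w + conj ξ / 2`. The Leibniz rule in `z`
gives `∑ i, C(n,i) (m)_i z^(m-i) (-a)^(n-i) exp (-a z)`, with `(m)_i` the falling factorial. The
terms with `i > m` vanish, and `C(n,i) (m)_i = m! n! / (i! (m-i)! (n-i)!)` for the others, which is,
up to `(-1)^n`, the defining sum of the complex Hermite polynomial
(`iteratedDeriv_pow_mul_cexp`).
-/

open Complex MeasureTheory

/-- The complex Hermite polynomials in two independent complex variables. -/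
noncomputable def cH (m n : ℕ) (z w : ℂ) : ℂ :=
  (m.factorial : ℂ) * (n.factorial : ℂ) *
    ∑ j ∈ Finset.range (min m n + 1),
      (-1 : ℂ) ^ j * z ^ (m - j) * w ^ (n - j) /
        ((j.factorial : ℂ) * ((m - j).factorial : ℂ) * ((n - j).factorial : ℂ))

/-- The generalized complex Hermite polynomials (GCHP). -/
noncomputable def G (ν : ℝ) (ξ : ℂ) (m n : ℕ) (z w : ℂ) : ℂ :=
  cH m n z ((ν : ℂ) * w + (starRingEnd ℂ) ξ / 2)

/-- The classical Rodrigues formula for `cH` in its first variable, the second being fixed. -/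
theorem iteratedDeriv_pow_mul_cexp (m n : ℕ) (a z : ℂ) :
    iteratedDeriv n (fun x : ℂ => x ^ m * Complex.exp (-a * x)) z
      = (-1 : ℂ) ^ n * Complex.exp (-a * z) * cH m n z a := by
  rw [iteratedDeriv_fun_mul (by fun_prop) (by fun_prop)]
  simp only [iteratedDeriv_cexp_const_mul, iteratedDeriv_pow]
  unfold cH
  rw [Finset.mul_sum, Finset.mul_sum]
  symm
  -- The Leibniz sum runs over `i ≤ n`, the one in `cH` over `i ≤ min m n`.
  apply Finset.sum_subset_zero_on_sdiff
  · intro i hi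
    simp only [Finset.mem_range] at *
    omega
  · intro i hi
    simp only [Finset.mem_sdiff, Finset.mem_range] at hi
    have h : m < i := by omega
    simp [Nat.descFactorial_of_lt h]
  · intro i hi
    simp only [Finset.mem_range] at hi
    have him : i ≤ m := by omega
    have hin : i ≤ n := by omega
    have h1 : (m.factorial : ℂ) = (m - i).factorial * m.descFactorial i := by
      exact_mod_cast (Nat.factorial_mul_descFactorial him).symm
    have h2 : (n.factorial : ℂ) = n.choose i * i.factorial * (n - i).factorial := by
      exact_mod_cast (Nat.choose_mul_factorial_mul_factorial hin).symm
    have h3 : (-1 : ℂ) ^ n * (-1) ^ i = (-1) ^ (n - i) := by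
      obtain ⟨k, rfl⟩ := Nat.exists_eq_add_of_le hin
      rw [Nat.add_sub_cancel_left, pow_add, mul_right_comm, ← mul_pow]
      simp
    have e1 : ((m - i).factorial : ℂ) ≠ 0 := by exact_mod_cast Nat.factorial_ne_zero _
    have e2 : ((n - i).factorial : ℂ) ≠ 0 := by exact_mod_cast Nat.factorial_ne_zero _
    have e3 : (i.factorial : ℂ) ≠ 0 := by exact_mod_cast Nat.factorial_ne_zero _
    rw [h1, h2, neg_pow a, ← h3]
    field_simp

/-- Rodriguez type formula for the GCHP. -/
theorem rodriguez_type_formula (ν : ℝ) (hν : 0 < ν) (ξ : ℂ) (m n : ℕ) (z w : ℂ) :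
    iteratedDeriv n
      (fun z' : ℂ => iteratedDeriv m
        (fun w' : ℂ => Complex.exp (-(ν : ℂ) * z' * w' - ((starRingEnd ℂ) ξ / 2) * z')) w) z
    = (-1 : ℂ) ^ (m + n) * (ν : ℂ) ^ m *
        Complex.exp (-(ν : ℂ) * z * w - ((starRingEnd ℂ) ξ / 2) * z) * G ν ξ m n z w := by
  have key : (fun z' : ℂ => iteratedDeriv m
        (fun w' : ℂ => Complex.exp (-(ν : ℂ) * z' * w' - ((starRingEnd ℂ) ξ / 2) * z')) w)
      = fun z' : ℂ => (-(ν : ℂ)) ^ m *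
        (z' ^ m * Complex.exp (-((ν : ℂ) * w + (starRingEnd ℂ) ξ / 2) * z')) := by
    funext z'
    simp only [sub_eq_add_neg, Complex.exp_add]
    rw [iteratedDeriv_mul_const_field, iteratedDeriv_cexp_const_mul]
    simp only [mul_pow, mul_assoc, ← Complex.exp_add]
    ring_nf
  rw [key, iteratedDeriv_const_mul_field, iteratedDeriv_pow_mul_cexp, G, neg_pow (ν : ℂ), pow_add]
  have he : -((ν : ℂ) * w + (starRingEnd ℂ) ξ / 2) * z
      = -(ν : ℂ) * z * w - ((starRingEnd ℂ) ξ / 2) * z := by ring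
  rw [he]
  ring
end

section
/- For every real ν > 0, every ξ ∈ ℂ, all nonnegative integers m, n and all (z,w) ∈ ℂ², the GCHP expand as a binomial sum of complex Hermite polynomials: G_ν^{m,n}(z,w|ξ) = (n!/(√ν)^m) · ∑_{j=0}^{n} ((√ν)^j/j!) · ((conj(ξ)/2)^{n-j}/(n-j)!) · H^{m,j}(√ν·z, √ν·w), where √ν is the positive real square root of ν. -/
/-!
Substituting `√ν z`, `√ν w` into the `k`-th term of `H^{m,j}` produces the power
`√ν ^ (m - k + (j - k))`, which together with the prefactor `√ν ^ j / √ν ^ m` equals `ν ^ (j - k)`.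
Exchanging the sums over `j` and `k` therefore leaves, for each `k`, the inner sum over `j ≥ k` of
`(ν w) ^ (j - k) / (j - k)! * (conj ξ / 2) ^ (n - j) / (n - j)!`, which by the binomial theorem
(`add_pow_div_factorial`) is `(ν w + conj ξ / 2) ^ (n - k) / (n - k)!`: the `k`-th term of
`H^{m,n}(z, ν w + conj ξ / 2)`.
-/

open Complex MeasureTheory

/-- The binomial theorem in exponential (divided-power) form. -/
lemma add_pow_div_factorial (a c : ℂ) (N : ℕ) :
    (a + c) ^ N / (N.factorial : ℂ) =
      ∑ i ∈ Finset.range (N + 1),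
        a ^ i / (i.factorial : ℂ) * (c ^ (N - i) / ((N - i).factorial : ℂ)) := by
  rw [add_pow, Finset.sum_div]
  refine Finset.sum_congr rfl fun i hi => ?_
  have hiN : i ≤ N := Nat.lt_succ_iff.mp (Finset.mem_range.mp hi)
  have h0 : ∀ k : ℕ, (k.factorial : ℂ) ≠ 0 := fun k => by exact_mod_cast k.factorial_ne_zero
  rw [Nat.cast_choose ℂ hiN]
  have h1 := h0 N
  have h2 := h0 i
  have h3 := h0 (N - i)
  field_simp

/-- Collection of the powers of `s = √ν` in the `k`-th term of `H^{m,j}(s z, s w)`. -/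
lemma scaled_term (s z w : ℂ) {m j k : ℕ} (hm : k ≤ m) (hj : k ≤ j) :
    s ^ j * ((s * z) ^ (m - k) * (s * w) ^ (j - k)) =
      s ^ m * (z ^ (m - k) * (s ^ 2 * w) ^ (j - k)) := by
  obtain ⟨a, rfl⟩ := Nat.exists_eq_add_of_le hm
  obtain ⟨b, rfl⟩ := Nat.exists_eq_add_of_le hj
  simp only [Nat.add_sub_cancel_left]
  ring

/-- The GCHP as a binomial sum of complex Hermite polynomials. -/
theorem gchp_binomial_sum (ν : ℝ) (hν : 0 < ν) (ξ : ℂ) (m n : ℕ) (z w : ℂ) :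
    G ν ξ m n z w
    = ((n.factorial : ℂ) / (Real.sqrt ν : ℂ) ^ m) *
        ∑ j ∈ Finset.range (n + 1),
          ((Real.sqrt ν : ℂ) ^ j / (j.factorial : ℂ)) *
            (((starRingEnd ℂ) ξ / 2) ^ (n - j) / ((n - j).factorial : ℂ)) *
            cH m j ((Real.sqrt ν : ℂ) * z) ((Real.sqrt ν : ℂ) * w) := by
  have h0 : ∀ k : ℕ, (k.factorial : ℂ) ≠ 0 := fun k => by exact_mod_cast k.factorial_ne_zero
  have hs : (Real.sqrt ν : ℂ) ≠ 0 := by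
    exact_mod_cast (Real.sqrt_pos.mpr hν).ne'
  have hsq : (ν : ℂ) = (Real.sqrt ν : ℂ) ^ 2 := by
    exact_mod_cast (Real.sq_sqrt hν.le).symm
  unfold G cH
  rw [hsq]
  generalize (Real.sqrt ν : ℂ) = s at hs
  generalize (starRingEnd ℂ) ξ / 2 = c
  simp only [Finset.mul_sum]
  rw [Finset.sum_comm' (s' := fun k => Finset.Ico k (n + 1)) (t' := Finset.range (min m n + 1))
    (by intro j k; simp only [Finset.mem_range, Finset.mem_Ico]; omega)]
  refine Finset.sum_congr rfl fun k hk => ?_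
  have hk' : k ≤ m ∧ k ≤ n := by
    rw [Finset.mem_range] at hk; omega
  have hbin := add_pow_div_factorial (s ^ 2 * w) c (n - k)
  calc _ = (m.factorial : ℂ) * n.factorial * ((-1) ^ k * z ^ (m - k) /
          (k.factorial * (m - k).factorial)) *
          ((s ^ 2 * w + c) ^ (n - k) / ((n - k).factorial : ℂ)) := by
        have h1 := h0 k
        have h2 := h0 (m - k)
        have h3 := h0 (n - k)
        field_simp
    _ = _ := by
        rw [hbin, Finset.mul_sum, Finset.sum_Ico_eq_sum_range,
          show n + 1 - k = n - k + 1 by omega]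
        refine Finset.sum_congr rfl fun i _ => ?_
        have ht := scaled_term s z w hk'.1 (Nat.le_add_right k i)
        rw [Nat.add_sub_cancel_left] at ht ⊢
        rw [← Nat.sub_sub n k i]
        have h1 := h0 k
        have h2 := h0 (m - k)
        have h3 := h0 (n - k - i)
        have h4 := h0 i
        have h5 := h0 (k + i)
        have hsm := pow_ne_zero m hs
        -- Both sides are a common factor times the two sides of `ht`, up to `s ^ m`.
        trans (m.factorial : ℂ) * n.factorial * (-1) ^ k * c ^ (n - k - i) /
          (k.factorial * (m - k).factorial * i.factorial * (n - k - i).factorial * s ^ m) *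
          (s ^ m * (z ^ (m - k) * (s ^ 2 * w) ^ i))
        · generalize (s ^ 2 * w) ^ i = x
          generalize s ^ m = y at hsm
          field_simp
        · rw [← ht]
          generalize (s * z) ^ (m - k) = x
          generalize (s * w) ^ i = x'
          generalize s ^ (k + i) = x''
          generalize s ^ m = y at hsm
          field_simp
end

section
/- For every real ν > 0, every ξ ∈ ℂ, all nonnegative integers m, n and all (z,w) ∈ ℂ²: (m - n)·G_ν^{m,n}(z,w|ξ) = -z·G_ν^{m,n+1}(z,w|ξ) + (ν·w + conj(ξ)/2)·G_ν^{m+1,n}(z,w|ξ), where m - n is taken as an integer; in particular, taking n = m + 1, z·G_ν^{m,m+1}(z,w|ξ) = (ν·w + conj(ξ)/2)·G_ν^{m+1,m}(z,w|ξ). -/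
/-!
The substitution `w ↦ ν w + conj ξ / 2` does not interact with the indices, so the claim is an
identity for `cH`: `(m - n) H^{m,n} = -z H^{m,n+1} + w H^{m+1,n}`.  It follows from the three-term
recurrence `H^{m+1,n+1} = w H^{m+1,n} - (m+1) H^{m,n}` (`cH_succ_succ`), the boundary values
`H^{0,n} = w^n`, and the symmetry `H^{m,n}(z,w) = H^{n,m}(w,z)`: the recurrences turn the right
side into `m z H^{m-1,n} - n w H^{m,n-1}`, then into `(m - n) H^{m,n}`, the two copies of
`m n H^{m-1,n-1}` cancelling.  The recurrence itself is Pascal's rule,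
applied termwise to the binomial form of the sum (`cH_eq_sum`).  The second identity is the
case `n = m`, where the left-hand side vanishes.
-/

open Complex MeasureTheory

/-- The `j`-th term of `cH m n z w` in binomial form; it vanishes for `j > min m n`, which allows
sums of different index to be compared over a common range. -/
noncomputable def cHTerm (m n : ℕ) (z w : ℂ) (j : ℕ) : ℂ :=
  (-1 : ℂ) ^ j * (j.factorial : ℂ) * (m.choose j : ℂ) * (n.choose j : ℂ) *
    z ^ (m - j) * w ^ (n - j)

lemma cH_eq_sum (m n N : ℕ) (z w : ℂ) (hN : min m n < N) :
    cH m n z w = ∑ j ∈ Finset.range N, cHTerm m n z w j := by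
  have hsub : Finset.range (min m n + 1) ⊆ Finset.range N := by
    intro j hj
    simp only [Finset.mem_range] at hj ⊢
    omega
  rw [← Finset.sum_subset hsub, cH, Finset.mul_sum]
  · refine Finset.sum_congr rfl fun j hj => ?_
    have hj' : j ≤ m ∧ j ≤ n := by
      simp only [Finset.mem_range] at hj
      omega
    have h1 := Nat.cast_choose ℂ hj'.1
    have h2 := Nat.cast_choose ℂ hj'.2
    have := Nat.cast_ne_zero (R := ℂ) |>.2 (Nat.factorial_ne_zero j)
    have := Nat.cast_ne_zero (R := ℂ) |>.2 (Nat.factorial_ne_zero (m - j))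
    have := Nat.cast_ne_zero (R := ℂ) |>.2 (Nat.factorial_ne_zero (n - j))
    rw [cHTerm, h1, h2]
    field_simp
  · intro j _ hj
    simp only [Finset.mem_range] at hj
    rcases Nat.lt_or_ge m j with h | h
    · simp [cHTerm, Nat.choose_eq_zero_of_lt h]
    · have h' : n < j := by omega
      simp [cHTerm, Nat.choose_eq_zero_of_lt h']

lemma cHTerm_succ_succ (m n j : ℕ) (z w : ℂ) :
    cHTerm (m + 1) (n + 1) z w (j + 1)
      = w * cHTerm (m + 1) n z w (j + 1) - (m + 1) * cHTerm m n z w j := by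
  have hm : ((m : ℂ) + 1) * (m.choose j : ℂ) = ((m + 1).choose (j + 1) : ℂ) * (j + 1) := by
    exact_mod_cast Nat.add_one_mul_choose_eq m j
  have hw : w * ((n.choose (j + 1) : ℂ) * w ^ (n - (j + 1)))
      = (n.choose (j + 1) : ℂ) * w ^ (n - j) := by
    rcases Nat.lt_or_ge n (j + 1) with h | h
    · simp [Nat.choose_eq_zero_of_lt h]
    · rw [show n - j = n - (j + 1) + 1 by omega, pow_succ]
      ring
  have hp : ((n + 1).choose (j + 1) : ℂ) = n.choose j + n.choose (j + 1) := by
    exact_mod_cast Nat.choose_succ_succ n j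
  simp only [cHTerm, Nat.add_sub_add_right, hp, Nat.factorial_succ, Nat.cast_mul, Nat.cast_add,
    Nat.cast_one, pow_succ]
  linear_combination
    ((-1 : ℂ) ^ j * j.factorial * n.choose j * z ^ (m - j) * w ^ (n - j)) * hm
    + ((-1 : ℂ) ^ j * ((j + 1) * j.factorial) * (m + 1).choose (j + 1) * z ^ (m - j)) * hw

lemma cH_succ_succ (m n : ℕ) (z w : ℂ) :
    cH (m + 1) (n + 1) z w = w * cH (m + 1) n z w - (m + 1) * cH m n z w := by
  rw [cH_eq_sum (m + 1) (n + 1) (m + 2 + 1) z w (by omega),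
    cH_eq_sum (m + 1) n (m + 2 + 1) z w (by omega), cH_eq_sum m n (m + 2) z w (by omega),
    Finset.sum_range_succ', Finset.sum_range_succ' (cHTerm (m + 1) n z w),
    Finset.sum_congr rfl fun j _ => cHTerm_succ_succ m n j z w,
    Finset.sum_sub_distrib, ← Finset.mul_sum, ← Finset.mul_sum]
  simp only [cHTerm, pow_zero, Nat.factorial_zero, Nat.choose_zero_right, Nat.sub_zero, pow_succ]
  ring

lemma cH_zero_left (n : ℕ) (z w : ℂ) : cH 0 n z w = w ^ n := by
  rw [cH_eq_sum 0 n 1 z w (by omega)]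
  simp [cHTerm]

lemma cH_symm (m n : ℕ) (z w : ℂ) : cH m n z w = cH n m w z := by
  rw [cH_eq_sum m n (m + 1) z w (by omega), cH_eq_sum n m (m + 1) w z (by omega)]
  refine Finset.sum_congr rfl fun j _ => ?_
  simp only [cHTerm]
  ring

lemma cH_zero_right (m : ℕ) (z w : ℂ) : cH m 0 z w = z ^ m := by
  rw [cH_symm, cH_zero_left]

/-- The mirror image of `cH_succ_succ` under `cH_symm`. -/
lemma cH_succ_succ' (m n : ℕ) (z w : ℂ) :
    cH (m + 1) (n + 1) z w = z * cH m (n + 1) z w - (n + 1) * cH m n z w := by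
  rw [cH_symm (m + 1), cH_succ_succ, cH_symm (n + 1), cH_symm n]

lemma cH_combined (m n : ℕ) (z w : ℂ) :
    ((m : ℂ) - n) * cH m n z w = -z * cH m (n + 1) z w + w * cH (m + 1) n z w := by
  rcases m with _ | m <;> rcases n with _ | n
  · simp only [cH_zero_left, cH_zero_right]
    push_cast
    ring
  · have h := cH_succ_succ' 0 n z w
    simp only [cH_zero_left] at h ⊢
    rw [h]
    push_cast
    ring
  · have h := cH_succ_succ m 0 z w
    simp only [cH_zero_right] at h ⊢
    rw [h]
    push_cast
    ring
  · have h1 := cH_succ_succ m (n + 1) z w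
    have h2 := cH_succ_succ' (m + 1) n z w
    have h3 := cH_succ_succ m n z w
    have h4 := cH_succ_succ' m n z w
    push_cast
    linear_combination z * h1 - w * h2 + (m + 1) * h4 - (n + 1) * h3

/-- Combined recursion relation and its specialization `n = m + 1`. -/
theorem gchp_combined_recursion (ν : ℝ) (hν : 0 < ν) (ξ : ℂ) (m n : ℕ) (z w : ℂ) :
    (((m : ℤ) - (n : ℤ) : ℤ) : ℂ) * G ν ξ m n z w
      = -z * G ν ξ m (n + 1) z w
        + ((ν : ℂ) * w + (starRingEnd ℂ) ξ / 2) * G ν ξ (m + 1) n z w ∧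
    z * G ν ξ m (m + 1) z w
      = ((ν : ℂ) * w + (starRingEnd ℂ) ξ / 2) * G ν ξ (m + 1) m z w := by
  have key (k l : ℕ) := cH_combined k l z ((ν : ℂ) * w + (starRingEnd ℂ) ξ / 2)
  constructor
  · simpa only [G, Int.cast_sub, Int.cast_natCast] using key m n
  · simp only [G]
    linear_combination key m m
end

section
/- Iteration formula: fix a real ν > 0, ξ ∈ ℂ and w ∈ ℂ, and let T be the operator on functions F : ℂ → ℂ defined by (T F)(z) := -(deriv F)(z) + (ν·w + conj(ξ)/2)·F(z). Then for all nonnegative integers m, n, the n-th iterate of T applied to the monomial function z ↦ z^m equals the function z ↦ G_ν^{m,n}(z,w|ξ). -/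
/-!
Write `a = ν w + ξ̄ / 2` and `T = -d/dz + a`. Since `-d/dz` commutes with multiplication by the
constant `a`, the iterate `T^n` expands binomially, and `(-d/dz)^j z^m = (-1)^j m (m-1) ⋯ (m-j+1)
z^(m-j)`. So both sides equal `∑_{j ≤ n} C(n,j) (-d/dz)^j z^m · a^(n-j)`: `cH_eq_sum_choose` puts
the Hermite polynomial into this form, and `neg_deriv_add_mul_cH` shows, by Pascal's rule, that
`T` raises the index `n` by one.
-/

open Complex MeasureTheory

/-- The function `(-d/dz)^j z^m`, in closed form; it vanishes for `j > m`. -/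
noncomputable def negDerivPow (m j : ℕ) (z : ℂ) : ℂ :=
  (-1 : ℂ) ^ j * (m.descFactorial j : ℂ) * z ^ (m - j)

lemma hasDerivAt_negDerivPow (m j : ℕ) (z : ℂ) :
    HasDerivAt (negDerivPow m j) (-negDerivPow m (j + 1) z) z := by
  have h := (hasDerivAt_pow (m - j) z).const_mul ((-1 : ℂ) ^ j * (m.descFactorial j : ℂ))
  refine h.congr_deriv ?_
  simp only [negDerivPow, Nat.descFactorial_succ, Nat.sub_sub]
  push_cast
  ring

/-- The sum defining `cH` runs to `min m n`; the terms with `m < j ≤ n` added here are zero. -/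
lemma cH_eq_sum_choose (m n : ℕ) (z a : ℂ) :
    cH m n z a =
      ∑ j ∈ Finset.range (n + 1), (n.choose j : ℂ) * (negDerivPow m j z * a ^ (n - j)) := by
  unfold cH
  rw [Finset.mul_sum]
  have hsub : Finset.range (min m n + 1) ⊆ Finset.range (n + 1) :=
    Finset.range_mono (by omega)
  rw [← Finset.sum_subset hsub]
  · refine Finset.sum_congr rfl fun j hj => ?_
    rw [Finset.mem_range] at hj
    have hm : j ≤ m := by omega
    have hn : j ≤ n := by omega
    have h1 : (n.choose j : ℂ) * j.factorial * (n - j).factorial = n.factorial := by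
      exact_mod_cast Nat.choose_mul_factorial_mul_factorial hn
    have h2 : ((m - j).factorial : ℂ) * m.descFactorial j = m.factorial := by
      exact_mod_cast Nat.factorial_mul_descFactorial hm
    have e1 : (j.factorial : ℂ) ≠ 0 := by exact_mod_cast j.factorial_ne_zero
    have e2 : ((m - j).factorial : ℂ) ≠ 0 := by exact_mod_cast (m - j).factorial_ne_zero
    have e3 : ((n - j).factorial : ℂ) ≠ 0 := by exact_mod_cast (n - j).factorial_ne_zero
    rw [← h1, ← h2, negDerivPow]
    field_simp
  · intro j hj hj'
    rw [Finset.mem_range] at hj hj'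
    have hm : m < j := by omega
    simp [negDerivPow, Nat.descFactorial_of_lt hm]

/-- The operator `-d/dz + a` raises the second index of `cH` by one. -/
lemma neg_deriv_add_mul_cH (m n : ℕ) (a z : ℂ) :
    -(deriv (fun z => cH m n z a) z) + a * cH m n z a = cH m (n + 1) z a := by
  have hd : HasDerivAt (fun z => cH m n z a)
      (∑ j ∈ Finset.range (n + 1),
        (n.choose j : ℂ) * (-negDerivPow m (j + 1) z * a ^ (n - j))) z := by
    simp only [cH_eq_sum_choose]
    exact HasDerivAt.fun_sum fun j _ =>
      ((hasDerivAt_negDerivPow m j z).mul_const _).const_mul _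
  rw [hd.deriv, cH_eq_sum_choose m (n + 1), cH_eq_sum_choose m n,
    Finset.sum_choose_succ_mul (fun i k => negDerivPow m i z * a ^ k) n, add_comm,
    Finset.mul_sum, ← Finset.sum_neg_distrib]
  congr 1
  · refine Finset.sum_congr rfl fun j hj => ?_
    rw [Finset.mem_range] at hj
    rw [show n + 1 - j = n - j + 1 by omega]
    ring
  · exact Finset.sum_congr rfl fun j _ => by ring

/-- The GCHP arise as iterated applications of a first order differential operator
to the monomial `z ^ m`. -/
theorem gchp_iteration (ν : ℝ) (hν : 0 < ν) (ξ : ℂ) (w : ℂ) (m n : ℕ) :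
    (fun F : ℂ → ℂ => fun z : ℂ => -(deriv F z) + ((ν : ℂ) * w + (starRingEnd ℂ) ξ / 2) * F z)^[n]
        (fun z : ℂ => z ^ m)
      = fun z : ℂ => G ν ξ m n z w := by
  induction n with
  | zero =>
    funext z
    simp [G, cH_eq_sum_choose, negDerivPow]
  | succ n ih =>
    rw [Function.iterate_succ_apply', ih]
    funext z
    exact neg_deriv_add_mul_cH m n _ z
end

section
/- Cross-term identity under weak orthogonality: fix a real ν > 0, ξ ∈ ℂ and a measurable weight ω : ℂ → ℝ, and for f, g : ℂ → ℂ set ⟨f, g⟩_ω := ∫_ℂ f(z)·conj(g(z))·ω(z) dλ(z). Write 𝔊^{m,n}(z) := G_ν^{m,n}(z, conj(z)|ξ). Assume: (H1) for all m, n, j, k the functions z ↦ 𝔊^{m,n}(z)·conj(𝔊^{j,k}(z))·ω(z) and z ↦ z·𝔊^{m,n}(z)·conj(𝔊^{j,k}(z))·ω(z) are integrable; (H2) ⟨𝔊^{m,n}, 𝔊^{j,k}⟩_ω = 0 whenever n ≠ k. Then for all nonnegative integers n and all integers m ≥ 1: (conj(ξ)/2)·⟨𝔊^{m,n}, 𝔊^{m-1,n}⟩_ω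 = ν^n·n!·( m·⟨𝔊^{m-1,0}, 𝔊^{m-1,0}⟩_ω - ν·⟨𝔊^{m,0}, 𝔊^{m,0}⟩_ω ). -/
/-!
Write `w = ν z̄ + ξ̄/2`. The complex Hermite polynomials satisfy the two three-term recurrences
`H^{m,n+1} = w H^{m,n} - m H^{m-1,n}` (`cH_succ_right`) and `z H^{j,k} = H^{j+1,k} + k H^{j,k-1}`
(`mul_cH`). Since multiplication by `z̄` is adjoint to multiplication by `z` for `⟨·,·⟩_ω`, they
combine into a relation between inner products (`inner_succ`):
`⟨G^{m,n+1}, G^{j,k}⟩ = ν (⟨G^{m,n}, G^{j+1,k}⟩ + k ⟨G^{m,n}, G^{j,k-1}⟩)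
  + (ξ̄/2) ⟨G^{m,n}, G^{j,k}⟩ - m ⟨G^{m-1,n}, G^{j,k}⟩`.
Under weak orthogonality, `k = n + 1` gives `⟨G^{m,n+1}, G^{j,n+1}⟩ = ν (n+1) ⟨G^{m,n}, G^{j,n}⟩`,
hence `⟨G^{m,n}, G^{j,n}⟩ = ν^n n! ⟨G^{m,0}, G^{j,0}⟩`, while `k = n`, `j = m - 1` gives
`(ξ̄/2) ⟨G^{m,n}, G^{m-1,n}⟩ = m ⟨G^{m-1,n}, G^{m-1,n}⟩ - ν ⟨G^{m,n}, G^{m,n}⟩`.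
-/

open Complex MeasureTheory

/-- Binomial form of `cH`, summed over `j ≤ n`: the terms with `j > m` vanish because
`m.choose j = 0`, so the range no longer depends on `m`. -/
lemma cH_eq_sum_s14 (m n : ℕ) (z w : ℂ) :
    cH m n z w = ∑ j ∈ Finset.range (n + 1), (-1 : ℂ) ^ j * (j.factorial : ℂ) *
      (m.choose j : ℂ) * (n.choose j : ℂ) * z ^ (m - j) * w ^ (n - j) := by
  have hsub : Finset.range (min m n + 1) ⊆ Finset.range (n + 1) := by
    intro x hx
    simp only [Finset.mem_range] at *
    omega
  rw [← Finset.sum_subset hsub]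
  · rw [cH, Finset.mul_sum]
    refine Finset.sum_congr rfl fun j hj => ?_
    have hj' : j ≤ m ∧ j ≤ n := by
      simp only [Finset.mem_range] at hj
      omega
    rw [Nat.cast_choose ℂ hj'.1, Nat.cast_choose ℂ hj'.2]
    have h1 := Nat.cast_ne_zero (R := ℂ).mpr j.factorial_ne_zero
    have h2 := Nat.cast_ne_zero (R := ℂ).mpr (m - j).factorial_ne_zero
    have h3 := Nat.cast_ne_zero (R := ℂ).mpr (n - j).factorial_ne_zero
    field_simp
  · intro j hj hj'
    simp only [Finset.mem_range] at hj hj'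
    have : m.choose j = 0 := Nat.choose_eq_zero_of_lt (by omega)
    simp [this]

/-- Raising recurrence in the second index, from Pascal's rule for `(n + 1).choose j`. At `m = 0`
the truncated `m - 1` is harmless thanks to the factor `m`. -/
lemma cH_succ_right (m n : ℕ) (z w : ℂ) :
    cH m (n + 1) z w = w * cH m n z w - m * cH (m - 1) n z w := by
  -- the absorption identity `(i + 1) * m.choose (i + 1) = m * (m - 1).choose i`
  have key : ∀ i : ℕ, ((i + 1).factorial : ℂ) * (m.choose (i + 1) : ℂ) * z ^ (m - (i + 1)) =
      m * ((i.factorial : ℂ) * ((m - 1).choose i : ℂ) * z ^ (m - 1 - i)) := by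
    intro i
    rcases m with _ | m
    · simp
    · have h : ((m : ℂ) + 1) * (m.choose i : ℂ) = ((m + 1).choose (i + 1) : ℂ) * (i + 1) := by
        exact_mod_cast Nat.add_one_mul_choose_eq m i
      rw [Nat.factorial_succ, Nat.add_sub_add_right, Nat.add_sub_cancel]
      push_cast
      linear_combination (-(i.factorial : ℂ) * z ^ (m - i)) * h
  have hw : w * cH m n z w = ∑ j ∈ Finset.range (n + 2), (-1 : ℂ) ^ j * (j.factorial : ℂ) *
      (m.choose j : ℂ) * (n.choose j : ℂ) * z ^ (m - j) * w ^ (n + 1 - j) := by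
    rw [Finset.sum_range_succ, cH_eq_sum_s14, Finset.mul_sum, Nat.choose_succ_self]
    simp only [Nat.cast_zero, mul_zero, zero_mul, add_zero]
    refine Finset.sum_congr rfl fun j hj => ?_
    simp only [Finset.mem_range] at hj
    rw [show n + 1 - j = (n - j) + 1 by omega, pow_succ]
    ring
  rw [hw, cH_eq_sum_s14 m (n + 1), cH_eq_sum_s14 (m - 1) n, Finset.sum_range_succ' _ (n + 1),
    Finset.sum_range_succ' _ (n + 1), Finset.mul_sum, add_sub_right_comm, ← Finset.sum_sub_distrib]
  congr 1
  · refine Finset.sum_congr rfl fun i _ => ?_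
    rw [Nat.choose_succ_succ, Nat.add_sub_add_right]
    push_cast
    linear_combination (-(-1 : ℂ) ^ i * (n.choose i : ℂ) * w ^ (n - i)) * key i
  · simp

lemma mul_cH (j k : ℕ) (z w : ℂ) :
    z * cH j k z w = cH (j + 1) k z w + k * cH j (k - 1) z w := by
  rw [cH_symm (j + 1) k, cH_symm j k, cH_symm j (k - 1), cH_succ_right]
  ring

/-- The inner product `⟨G^{m,n}, G^{j,k}⟩_ω`, with the second variable set to `conj z`. -/
noncomputable def gInner (ν : ℝ) (ξ : ℂ) (ω : ℂ → ℝ) (m n j k : ℕ) : ℂ :=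
  ∫ z : ℂ, G ν ξ m n z ((starRingEnd ℂ) z) *
    (starRingEnd ℂ) (G ν ξ j k z ((starRingEnd ℂ) z)) * (ω z : ℂ)

/-- Both recurrences combined: the factor `conj z` produced by raising `n` is moved to the second
argument as `z`, where it raises `j`. -/
lemma inner_succ (ν : ℝ) (ξ : ℂ) (ω : ℂ → ℝ)
    (H : ∀ m n j k : ℕ, Integrable (fun z : ℂ =>
        G ν ξ m n z ((starRingEnd ℂ) z) *
          (starRingEnd ℂ) (G ν ξ j k z ((starRingEnd ℂ) z)) * (ω z : ℂ)))
    (m n j k : ℕ) :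
    gInner ν ξ ω m (n + 1) j k =
      ν * (gInner ν ξ ω m n (j + 1) k + k * gInner ν ξ ω m n j (k - 1)) +
        (starRingEnd ℂ) ξ / 2 * gInner ν ξ ω m n j k - m * gInner ν ξ ω (m - 1) n j k := by
  unfold gInner
  have i1 := H m n (j + 1) k
  have i2 := (H m n j (k - 1)).const_mul (k : ℂ)
  have i3 := (H m n j k).const_mul ((starRingEnd ℂ) ξ / 2)
  have i4 := (H (m - 1) n j k).const_mul (m : ℂ)
  have i12 := (i1.fun_add i2).const_mul (ν : ℂ)
  rw [← integral_const_mul, ← integral_add i1 i2, ← integral_const_mul, ← integral_const_mul,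
    ← integral_add i12 i3, ← integral_const_mul, ← integral_sub (i12.fun_add i3) i4]
  refine integral_congr_ae (.of_forall fun z => ?_)
  have h1 : G ν ξ m (n + 1) z ((starRingEnd ℂ) z) = _ := cH_succ_right m n z _
  have h2 := congrArg (starRingEnd ℂ)
    (mul_cH j k z ((ν : ℂ) * (starRingEnd ℂ) z + (starRingEnd ℂ) ξ / 2))
  simp only [map_mul, map_add, map_natCast] at h2
  beta_reduce
  rw [h1]
  simp only [G]
  linear_combination
    (ν * cH m n z ((ν : ℂ) * (starRingEnd ℂ) z + (starRingEnd ℂ) ξ / 2) * (ω z : ℂ)) * h2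

/-- Cross-term identity for the GCHP under the weak orthogonality assumption. -/
theorem gchp_cross_term_identity (ν : ℝ) (hν : 0 < ν) (ξ : ℂ)
    (ω : ℂ → ℝ) (hω : Measurable ω)
    (H1 : ∀ m n j k : ℕ,
      Integrable (fun z : ℂ =>
        G ν ξ m n z ((starRingEnd ℂ) z) *
          (starRingEnd ℂ) (G ν ξ j k z ((starRingEnd ℂ) z)) * (ω z : ℂ)) ∧
      Integrable (fun z : ℂ =>
        z * G ν ξ m n z ((starRingEnd ℂ) z) *
          (starRingEnd ℂ) (G ν ξ j k z ((starRingEnd ℂ) z)) * (ω z : ℂ)))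
    (H2 : ∀ m n j k : ℕ, n ≠ k →
      ∫ z : ℂ, G ν ξ m n z ((starRingEnd ℂ) z) *
        (starRingEnd ℂ) (G ν ξ j k z ((starRingEnd ℂ) z)) * (ω z : ℂ) = 0)
    (n : ℕ) (m : ℕ) (hm : 1 ≤ m) :
    ((starRingEnd ℂ) ξ / 2) *
        ∫ z : ℂ, G ν ξ m n z ((starRingEnd ℂ) z) *
          (starRingEnd ℂ) (G ν ξ (m - 1) n z ((starRingEnd ℂ) z)) * (ω z : ℂ)
      = (ν : ℂ) ^ n * (n.factorial : ℂ) *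
          ((m : ℂ) *
              (∫ z : ℂ, G ν ξ (m - 1) 0 z ((starRingEnd ℂ) z) *
                (starRingEnd ℂ) (G ν ξ (m - 1) 0 z ((starRingEnd ℂ) z)) * (ω z : ℂ))
            - (ν : ℂ) *
                ∫ z : ℂ, G ν ξ m 0 z ((starRingEnd ℂ) z) *
                  (starRingEnd ℂ) (G ν ξ m 0 z ((starRingEnd ℂ) z)) * (ω z : ℂ)) := by
  have I := inner_succ ν ξ ω fun m n j k => (H1 m n j k).1
  have O : ∀ m n j k : ℕ, n ≠ k → gInner ν ξ ω m n j k = 0 := H2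
  have step : ∀ a b n : ℕ,
      gInner ν ξ ω a n b n = (ν : ℂ) ^ n * (n.factorial : ℂ) * gInner ν ξ ω a 0 b 0 := by
    intro a b n
    induction n with
    | zero => simp
    | succ n ih =>
      rw [I, O a n (b + 1) (n + 1) (by omega), O a n b (n + 1) (by omega),
        O (a - 1) n b (n + 1) (by omega), Nat.add_sub_cancel, ih, Nat.factorial_succ]
      push_cast
      ring
  change (starRingEnd ℂ) ξ / 2 * gInner ν ξ ω m n (m - 1) n =
    (ν : ℂ) ^ n * (n.factorial : ℂ) *
      ((m : ℂ) * gInner ν ξ ω (m - 1) 0 (m - 1) 0 - (ν : ℂ) * gInner ν ξ ω m 0 m 0)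
  -- at `n = 0` the term with `n - 1` is not orthogonal, but its coefficient `n` vanishes
  have hz : (n : ℂ) * gInner ν ξ ω m n (m - 1) (n - 1) = 0 := by
    rcases n with _ | n
    · simp
    · rw [O _ _ _ _ (by omega), mul_zero]
  have h := I m n (m - 1) n
  rw [O m (n + 1) (m - 1) n (by omega), hz, Nat.sub_add_cancel hm] at h
  linear_combination -h + (m : ℂ) * step (m - 1) (m - 1) n - (ν : ℂ) * step m m n
end

section
/- Laguerre–Hermite identity: for all nonnegative integers m, n with m ≥ n and all (z,w) ∈ ℂ², z^{m-n} · L_n^{m-n}(z·w + z) = (-1)^n · ∑_{j=0}^{n} H^{m,j}(z,w) / (j!·(n-j)!). -/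
/-!
Expanding the Hermite polynomials and exchanging the two summations, the inner sum
`∑ j, w ^ (j - i) / ((n - j)! (j - i)!)` is `(w + 1) ^ (n - i) / (n - i)!` by the binomial theorem
(`sum_pow_div_factorial`). What remains is a single sum over `i`, which is the Laguerre
sum for the argument `z * (w + 1)` read in reverse order, `k = n - i`.
-/

open Complex MeasureTheory

/-- The generalized Laguerre polynomial with nonnegative integer parameters and
complex argument. -/
noncomputable def cLaguerre (s α : ℕ) (x : ℂ) : ℂ :=
  ∑ k ∈ Finset.range (s + 1),
    (-1 : ℂ) ^ k * ((s + α).factorial : ℂ) /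
      (((s - k).factorial : ℂ) * ((α + k).factorial : ℂ) * (k.factorial : ℂ)) * x ^ k

/-- The binomial theorem, divided by `d!`. -/
lemma sum_pow_div_factorial (d : ℕ) (w : ℂ) :
    ∑ k ∈ Finset.range (d + 1), w ^ k / ((k.factorial : ℂ) * ((d - k).factorial : ℂ))
      = (w + 1) ^ d / (d.factorial : ℂ) := by
  rw [add_pow, Finset.sum_div]
  refine Finset.sum_congr rfl fun k hk => ?_
  have hk' : k ≤ d := Nat.lt_succ_iff.mp (Finset.mem_range.mp hk)
  have h1 : (d.factorial : ℂ) ≠ 0 := by exact_mod_cast d.factorial_ne_zero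
  rw [Nat.cast_choose ℂ hk']
  field_simp
  simp

/-- The sum of Hermite polynomials collapsed to a single sum. -/
lemma sum_cH_div_factorial (m n : ℕ) (h : n ≤ m) (z w : ℂ) :
    ∑ j ∈ Finset.range (n + 1), cH m j z w / ((j.factorial : ℂ) * ((n - j).factorial : ℂ))
      = ∑ i ∈ Finset.range (n + 1), (-1 : ℂ) ^ i * (m.factorial : ℂ) * z ^ (m - i) /
          ((i.factorial : ℂ) * ((m - i).factorial : ℂ)) *
            ((w + 1) ^ (n - i) / ((n - i).factorial : ℂ)) := by
  have expand : ∀ j ∈ Finset.range (n + 1),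
      cH m j z w / ((j.factorial : ℂ) * ((n - j).factorial : ℂ))
        = ∑ i ∈ Finset.range (j + 1), (-1 : ℂ) ^ i * (m.factorial : ℂ) * z ^ (m - i) /
          ((i.factorial : ℂ) * ((m - i).factorial : ℂ)) *
            (w ^ (j - i) / (((j - i).factorial : ℂ) * ((n - j).factorial : ℂ))) := by
    intro j hj
    have hjm : j ≤ m := (Nat.lt_succ_iff.mp (Finset.mem_range.mp hj)).trans h
    have h1 : (j.factorial : ℂ) ≠ 0 := by exact_mod_cast j.factorial_ne_zero
    rw [cH, min_eq_right hjm, Finset.mul_sum, Finset.sum_div]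
    refine Finset.sum_congr rfl fun i _ => ?_
    field_simp
  rw [Finset.sum_congr rfl expand,
    Finset.sum_comm' (t' := Finset.range (n + 1)) (s' := fun i => Finset.Ico i (n + 1))
      (by intro j i; simp only [Finset.mem_range, Finset.mem_Ico]; omega)]
  refine Finset.sum_congr rfl fun i hi => ?_
  have hin : i ≤ n := Nat.lt_succ_iff.mp (Finset.mem_range.mp hi)
  rw [← Finset.mul_sum, ← sum_pow_div_factorial, Finset.sum_Ico_eq_sum_range,
    Nat.succ_sub hin]
  congr 1
  refine Finset.sum_congr rfl fun k _ => ?_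
  rw [Nat.add_sub_cancel_left, Nat.sub_add_eq]

/-- Laguerre–Hermite identity. -/
theorem laguerre_hermite_identity (m n : ℕ) (h : n ≤ m) (z w : ℂ) :
    z ^ (m - n) * cLaguerre n (m - n) (z * w + z)
      = (-1 : ℂ) ^ n *
          ∑ j ∈ Finset.range (n + 1),
            cH m j z w / ((j.factorial : ℂ) * ((n - j).factorial : ℂ)) := by
  rw [sum_cH_div_factorial m n h, cLaguerre, ← Finset.sum_range_reflect, Finset.mul_sum,
    Finset.mul_sum]
  refine Finset.sum_congr rfl fun i hi => ?_
  have hin : i ≤ n := Nat.lt_succ_iff.mp (Finset.mem_range.mp hi)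
  have e1 : n + 1 - 1 - i = n - i := by omega
  have e2 : n - (n - i) = i := by omega
  have e3 : m - n + (n - i) = m - i := by omega
  have e4 : n + (m - n) = m := by omega
  have e5 : (-1 : ℂ) ^ n * (-1) ^ i = (-1) ^ (n - i) := by
    obtain ⟨d, rfl⟩ := Nat.exists_eq_add_of_le hin
    rw [Nat.add_sub_cancel_left, pow_add, mul_right_comm, ← mul_pow]
    simp
  have e6 : z * w + z = z * (w + 1) := by ring
  rw [e1, e2, e3, e4, e6, mul_pow, ← e5, ← e3, pow_add]
  ring
end
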